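/- Suppose each F_i is convex and let 0 < ℓ ≤ r. Then u_r(x) ≤ u_ℓ(x) ≤ (r/ℓ) u_r(x) for every x ∈ S. -/

import Mathlib

/-- The regularized merit function
`u_ℓ(x) = max_{y ∈ S} min_i (F i x - F i y - (ℓ/2)‖x - y‖²)`. -/
noncomputable def meritU {n m : ℕ} (ℓ : ℝ) (S : Set (EuclideanSpace ℝ (Fin n)))
    (F : Fin m → EuclideanSpace ℝ (Fin n) → ℝ)
    (x : EuclideanSpace ℝ (Fin n)) : ℝ :=
  sSup ((fun y => ⨅ i, (F i x - F i y - ℓ / 2 * ‖x - y‖ ^ 2)) '' S)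

/-!
The gap `min_i (F i x - F i y) - (ℓ/2)‖x - y‖²` decreases in `ℓ`, which gives the first inequality.
For the second, contract the competitor `y` towards `x` by the factor `t = ℓ / r`: by convexity each
decrease `F i x - F i y` keeps at least the fraction `t`, whereas the quadratic penalty is scaled by
`t²`, which becomes exactly `t` once the parameter is raised from `ℓ` to `r`. Both comparisons pass
to the suprema because a convex function that is bounded below near `x` decreases at most linearly
away from `x`, so that the quadratic penalty dominates and the suprema are finite.
-/

open Filter Set Topology

lemma mul_sub_le_sub_of_convexOn {E : Type*} [AddCommMonoid E] [SMul ℝ E] {S : Set E} {x y : E}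
    {f : E → ℝ} (hf : ConvexOn ℝ S f) (hx : x ∈ S) (hy : y ∈ S) {t : ℝ} (ht₀ : 0 ≤ t)
    (ht₁ : t ≤ 1) :
    t * (f x - f y) ≤ f x - f ((1 - t) • x + t • y) := by
  have hconv := hf.2 hx hy (sub_nonneg.2 ht₁) ht₀ (sub_add_cancel 1 t)
  simp only [smul_eq_mul] at hconv
  linarith

section LinearDecrease

variable {E : Type*} [SeminormedAddCommGroup E] [NormedSpace ℝ E] {S : Set E} {x y : E}

lemma norm_sub_one_sub_smul_add_smul {t : ℝ} (ht : 0 ≤ t) :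
    ‖x - ((1 - t) • x + t • y)‖ = t * ‖x - y‖ := by
  rw [show x - ((1 - t) • x + t • y) = t • (x - y) by module, norm_smul, Real.norm_of_nonneg ht]

lemma exists_sub_le_add_mul_norm_of_convexOn {f : E → ℝ} (hf : ConvexOn ℝ S f) (hx : x ∈ S)
    (hbdd : IsBoundedUnder (· ≥ ·) (𝓝[S] x) f) :
    ∃ a b : ℝ, ∀ y ∈ S, f x - f y ≤ a + b * ‖x - y‖ := by
  obtain ⟨c, hc⟩ := hbdd
  obtain ⟨δ, hδ, hball⟩ := Metric.mem_nhdsWithin_iff.1 (eventually_map.1 hc)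
  refine ⟨f x - c, (f x - c) / δ, fun y hy => ?_⟩
  -- This choice of `t` puts `(1 - t) • x + t • y` within `δ` of `x` however far away `y` is.
  set t := δ / (δ + ‖x - y‖) with ht
  have ht₀ : 0 < t := by positivity
  have ht₁ : t ≤ 1 := div_le_one_of_le₀ (by linarith [norm_nonneg (x - y)]) (by positivity)
  have hdist : dist ((1 - t) • x + t • y) x < δ := by
    rw [dist_comm, dist_eq_norm, norm_sub_one_sub_smul_add_smul ht₀.le, ht, div_mul_eq_mul_div,
      div_lt_iff₀ (by positivity)]
    nlinarith
  have hlower : c ≤ f ((1 - t) • x + t • y) :=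
    hball ⟨hdist, hf.1 hx hy (sub_nonneg.2 ht₁) ht₀.le (sub_add_cancel 1 t)⟩
  calc f x - f y ≤ (f x - c) / t := by
        rw [le_div_iff₀' ht₀]
        linarith [mul_sub_le_sub_of_convexOn hf hx hy ht₀.le ht₁]
    _ = f x - c + (f x - c) / δ * ‖x - y‖ := by
        rw [ht]
        field_simp

end LinearDecrease

lemma mul_sub_half_mul_sq_le {ℓ : ℝ} (hℓ : 0 < ℓ) (b d : ℝ) :
    b * d - ℓ / 2 * d ^ 2 ≤ b ^ 2 / (2 * ℓ) := by
  rw [le_div_iff₀ (by positivity)]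
  linarith [sq_nonneg (b - ℓ * d)]

section RegularizedMerit

variable {E ι : Type*} [SeminormedAddCommGroup E]

/-- The regularized gap `min_i (F i x - F i y - (ℓ/2)‖x - y‖²)` between `x` and a competitor `y`,
whose supremum over `y` is the regularized merit function. The minimum is encoded as a real
infimum, so it is meant for a finite nonempty `ι`. -/
noncomputable def regularizedGap (ℓ : ℝ) (F : ι → E → ℝ) (x y : E) : ℝ :=
  ⨅ i, (F i x - F i y - ℓ / 2 * ‖x - y‖ ^ 2)

/-- The regularized merit function of a family of objectives on a seminormed space; `meritU` is the
case of finitely many objectives on a Euclidean space. The maximum is encoded as a real supremum,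
so it is meaningful only where the gap is bounded above on a nonempty `S`. -/
noncomputable def regularizedMerit (ℓ : ℝ) (S : Set E) (F : ι → E → ℝ) (x : E) : ℝ :=
  sSup (regularizedGap ℓ F x '' S)

variable [Finite ι] {F : ι → E → ℝ} {S : Set E} {x y : E} {ℓ r : ℝ}

lemma regularizedGap_le (i : ι) :
    regularizedGap ℓ F x y ≤ F i x - F i y - ℓ / 2 * ‖x - y‖ ^ 2 :=
  ciInf_le (finite_range _).bddBelow i

lemma regularizedGap_anti (hℓr : ℓ ≤ r) : regularizedGap r F x y ≤ regularizedGap ℓ F x y :=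
  ciInf_mono (finite_range _).bddBelow fun _ => by gcongr

lemma regularizedMerit_anti (hS : S.Nonempty) (hbdd : BddAbove (regularizedGap ℓ F x '' S))
    (hℓr : ℓ ≤ r) : regularizedMerit r S F x ≤ regularizedMerit ℓ S F x := by
  refine csSup_le (hS.image _) (forall_mem_image.2 fun y hy => ?_)
  exact (regularizedGap_anti hℓr).trans (le_csSup hbdd (mem_image_of_mem _ hy))

variable [NormedSpace ℝ E]

lemma mul_regularizedGap_le (hF : ∀ i, ConvexOn ℝ S (F i)) (hx : x ∈ S) (hy : y ∈ S)
    {t : ℝ} (ht₀ : 0 ≤ t) (ht₁ : t ≤ 1) :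
    t * regularizedGap (r * t) F x y ≤ regularizedGap r F x ((1 - t) • x + t • y) := by
  rw [regularizedGap, Real.mul_iInf_of_nonneg ht₀]
  refine ciInf_mono (finite_range _).bddBelow fun i => ?_
  rw [norm_sub_one_sub_smul_add_smul ht₀]
  linarith [mul_sub_le_sub_of_convexOn (hF i) hx hy ht₀ ht₁]

lemma regularizedMerit_le_div_mul (hS : Convex ℝ S) (hF : ∀ i, ConvexOn ℝ S (F i)) (hx : x ∈ S)
    (hbdd : BddAbove (regularizedGap r F x '' S)) (hℓ : 0 < ℓ) (hℓr : ℓ ≤ r) :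
    regularizedMerit ℓ S F x ≤ r / ℓ * regularizedMerit r S F x := by
  have hr : 0 < r := hℓ.trans_le hℓr
  have ht₀ : 0 ≤ ℓ / r := by positivity
  have ht₁ : ℓ / r ≤ 1 := (div_le_one hr).2 hℓr
  refine csSup_le ((nonempty_of_mem hx).image _) (forall_mem_image.2 fun y hy => ?_)
  have hmem : (1 - ℓ / r) • x + (ℓ / r) • y ∈ S :=
    hS hx hy (sub_nonneg.2 ht₁) ht₀ (sub_add_cancel 1 _)
  calc regularizedGap ℓ F x y
      = r / ℓ * (ℓ / r * regularizedGap (r * (ℓ / r)) F x y) := by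
        rw [mul_div_cancel₀ ℓ hr.ne']
        field_simp
    _ ≤ r / ℓ * regularizedGap r F x ((1 - ℓ / r) • x + (ℓ / r) • y) := by
        gcongr
        exact mul_regularizedGap_le hF hx hy ht₀ ht₁
    _ ≤ r / ℓ * regularizedMerit r S F x := by
        gcongr
        exact le_csSup hbdd (mem_image_of_mem _ hmem)

lemma bddAbove_regularizedGap_image {i : ι} (hF : ConvexOn ℝ S (F i)) (hx : x ∈ S)
    (hbdd : IsBoundedUnder (· ≥ ·) (𝓝[S] x) (F i)) (hℓ : 0 < ℓ) :
    BddAbove (regularizedGap ℓ F x '' S) := by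
  obtain ⟨a, b, hab⟩ := exists_sub_le_add_mul_norm_of_convexOn hF hx hbdd
  refine ⟨a + b ^ 2 / (2 * ℓ), forall_mem_image.2 fun y hy => ?_⟩
  calc regularizedGap ℓ F x y
      ≤ F i x - F i y - ℓ / 2 * ‖x - y‖ ^ 2 := regularizedGap_le i
    _ ≤ a + (b * ‖x - y‖ - ℓ / 2 * ‖x - y‖ ^ 2) := by linarith [hab y hy]
    _ ≤ a + b ^ 2 / (2 * ℓ) := by grw [mul_sub_half_mul_sq_le hℓ]

theorem meritU_parameter_comparison_general (hF : ∀ i, ConvexOn ℝ S (F i)) (hx : x ∈ S)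
    (hbdd : ∃ i, IsBoundedUnder (· ≥ ·) (𝓝[S] x) (F i)) (hℓ : 0 < ℓ) (hℓr : ℓ ≤ r) :
    regularizedMerit r S F x ≤ regularizedMerit ℓ S F x ∧
      regularizedMerit ℓ S F x ≤ r / ℓ * regularizedMerit r S F x := by
  obtain ⟨i, hi⟩ := hbdd
  have hbddGap {s : ℝ} (hs : 0 < s) : BddAbove (regularizedGap s F x '' S) :=
    bddAbove_regularizedGap_image (hF i) hx hi hs
  exact ⟨regularizedMerit_anti ⟨x, hx⟩ (hbddGap hℓ) hℓr,
    regularizedMerit_le_div_mul (hF i).1 hF hx (hbddGap (hℓ.trans_le hℓr)) hℓ hℓr⟩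

end RegularizedMerit

/-- if each `F i` is convex and `0 < ℓ ≤ r`, then
`u_r(x) ≤ u_ℓ(x) ≤ (r/ℓ) u_r(x)` for every `x ∈ S`. -/
theorem meritU_parameter_comparison {n m : ℕ} (hm : 0 < m)
    (S : Set (EuclideanSpace ℝ (Fin n))) (hS : S.Nonempty)
    (hSclosed : IsClosed S) (hSconv : Convex ℝ S)
    (F : Fin m → EuclideanSpace ℝ (Fin n) → ℝ)
    (hFconv : ∀ i, ConvexOn ℝ Set.univ (F i))
    (ℓ r : ℝ) (hℓ : 0 < ℓ) (hℓr : ℓ ≤ r) :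
    ∀ x ∈ S, meritU r S F x ≤ meritU ℓ S F x ∧
      meritU ℓ S F x ≤ r / ℓ * meritU r S F x := by
  intro x hx
  have hcont : Continuous (F ⟨0, hm⟩) :=
    continuousOn_univ.1 ((hFconv ⟨0, hm⟩).continuousOn isOpen_univ)
  exact meritU_parameter_comparison_general (fun i => (hFconv i).subset (subset_univ S) hSconv) hx
    ⟨⟨0, hm⟩, hcont.continuousWithinAt.isBoundedUnder_ge⟩ hℓ hℓr
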